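/- Let p be prime and F = ℚ(√p). The quotient Pic⁺(O_F)/Pic⁺(O_F)² of the narrow class group by its subgroup of squares has order 1 if p = 2 or p ≡ 1 (mod 4), and order 2 if p ≡ 3 (mod 4). -/

import Mathlib

/-!
In a finite abelian group `Q` the quotient `Q / Q²` has as many elements as `Q` has classes `c` with
`c² = 1`. Let `Q` be the narrow class group of the quadratic field, `σ` the conjugation and `I` an
ideal in such a class `c`. As `I²` has a generator of positive norm, Hilbert 90 shows that `I` is a
field element times a `σ`-fixed ideal. A `σ`-fixed ideal is a product of ideals `P * σ P`, which are
generated by integers, and of `σ`-fixed primes. The latter are principal, being generated by an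
integer, by `√p`, or by some `u + v √p` with `u² - p v² = ± 2`, which descent on the Pell equation
provides. So `I` is principal, and `c` is `1` or the class of `(√p)` according to the sign of the
norm of a generator.

The two classes agree exactly when there is a unit of norm `-1`. For `p = 2` or `p ≡ 1 (mod 4)` the
Pell descent yields one; for `p ≡ 3 (mod 4)` reduction modulo `√p` would turn it into a square root
of `-1` in `ZMod p`.
-/

open NumberField

/-- The subgroup of invertible fractional ideals generated by (equivalently,
consisting of) principal fractional ideals with a totally positive generator. -/
noncomputable def totPosPrincipal (K : Type*) [Field K] [NumberField K] :
    Subgroup (FractionalIdeal (nonZeroDivisors (𝓞 K)) K)ˣ :=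
  Subgroup.closure {I : (FractionalIdeal (nonZeroDivisors (𝓞 K)) K)ˣ |
    ∃ a : K, (∀ φ : K →+* ℝ, 0 < φ a) ∧
      (I : FractionalIdeal (nonZeroDivisors (𝓞 K)) K) =
        FractionalIdeal.spanSingleton (nonZeroDivisors (𝓞 K)) a}

/-- The narrow class group `Pic⁺(O_K)`. -/
noncomputable def narrowClassGroup (K : Type*) [Field K] [NumberField K] :=
  (FractionalIdeal (nonZeroDivisors (𝓞 K)) K)ˣ ⧸ totPosPrincipal K

noncomputable instance (K : Type*) [Field K] [NumberField K] :
    CommGroup (narrowClassGroup K) :=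
  QuotientGroup.Quotient.commGroup (totPosPrincipal K)

open scoped Pointwise

section Pell

theorem eq_sq_and_eq_prime_mul_sq_of_mul_eq {p : ℕ} (hp : p.Prime) {a b c : ℕ}
    (hab : a.Coprime b) (h : a * b = p * c ^ 2) :
    ∃ u v : ℕ, (a = u ^ 2 ∧ b = p * v ^ 2) ∨ (a = p * v ^ 2 ∧ b = u ^ 2) := by
  have factor {a d : ℕ} (had : a.Coprime (p * d)) (h : a * (p * d) = p * c ^ 2) :
      ∃ u v : ℕ, a = u ^ 2 ∧ p * d = p * v ^ 2 := by
    have hsq : a * d = c ^ 2 :=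
      Nat.eq_of_mul_eq_mul_left hp.pos ((Nat.mul_left_comm p a d).trans h)
    have had : a.Coprime d := had.coprime_mul_left_right
    obtain ⟨u, hu⟩ := exists_eq_pow_of_mul_eq_pow (Nat.isUnit_iff.2 had) hsq
    obtain ⟨v, hv⟩ := exists_eq_pow_of_mul_eq_pow (Nat.isUnit_iff.2 had.symm)
      ((Nat.mul_comm d a).trans hsq)
    exact ⟨u, v, hu, by rw [hv]⟩
  rcases (Nat.Prime.dvd_mul hp).1 (Dvd.intro _ h.symm) with ⟨d, rfl⟩ | ⟨d, rfl⟩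
  · obtain ⟨u, v, hb, ha⟩ := factor hab.symm ((Nat.mul_comm b _).trans h)
    exact ⟨u, v, .inr ⟨ha, hb⟩⟩
  · obtain ⟨u, v, ha, hb⟩ := factor hab h
    exact ⟨u, v, .inl ⟨ha, hb⟩⟩

theorem exists_minimal_pell {d : ℕ} (hd : ¬IsSquare d) :
    ∃ x y : ℕ, 1 < x ∧ x ^ 2 = d * y ^ 2 + 1 ∧
      ∀ u v : ℕ, 1 < u → u ^ 2 = d * v ^ 2 + 1 → x ≤ u := by
  have hd0 : 0 < d := Nat.pos_of_ne_zero fun h ↦ hd (h ▸ IsSquare.zero)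
  obtain ⟨s, hs⟩ := Pell.IsFundamental.exists_of_not_isSquare (d := (d : ℤ))
    (mod_cast hd0) (mod_cast hd)
  obtain ⟨x, hx⟩ := Int.eq_ofNat_of_zero_le (zero_le_one.trans hs.1.le)
  obtain ⟨y, hy⟩ := Int.eq_ofNat_of_zero_le hs.2.1.le
  have hx1 := hs.1
  have hxy := eq_add_of_sub_eq' s.prop
  rw [hx] at hx1 hxy
  rw [hy] at hxy
  refine ⟨x, y, mod_cast hx1, mod_cast hxy, fun u v hu huv ↦ ?_⟩
  have hle := hs.x_le_x (a := Pell.Solution₁.mk u v (sub_eq_of_eq_add' (mod_cast huv)))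
    (by simpa using hu)
  simpa [hx] using hle

/- Descent from the fundamental solution of `x² - p y² = 1`: the two factors in
`(x - 1) (x + 1) = p y²` are, up to a common factor `2`, a square and `p` times a square. For odd
`x` one of the two cases would give a solution of Pell's equation smaller than the fundamental
one. -/
theorem exists_sq_sub_prime_mul_sq_eq {p : ℕ} (hp : p.Prime) (hp2 : p ≠ 2) :
    ∃ u v : ℤ, u ^ 2 - p * v ^ 2 = -1 ∨ u ^ 2 - p * v ^ 2 = 2 ∨ u ^ 2 - p * v ^ 2 = -2 := by
  obtain ⟨x, y, hx1, hxy, hmin⟩ := exists_minimal_pell hp.prime.irreducible.not_isSquare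
  rcases Nat.even_or_odd' x with ⟨k, rfl | rfl⟩
  · obtain ⟨k, rfl⟩ : ∃ l, k = l + 1 := Nat.exists_eq_succ_of_ne_zero (by omega)
    have hcop : Nat.Coprime (2 * k + 3) (2 * k + 1) := by
      simp [Nat.coprime_add_self_left, show 2 * k + 3 = 2 + (2 * k + 1) by ring]
    obtain ⟨u, v, ⟨hu, hv⟩ | ⟨hv, hu⟩⟩ :=
      eq_sq_and_eq_prime_mul_sq_of_mul_eq hp (c := y) hcop (by linarith)
    · exact ⟨u, v, .inr (.inl (by zify at hu hv; linarith))⟩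
    · exact ⟨u, v, .inr (.inr (by zify at hu hv; linarith))⟩
  · have hyeven : Even y := by
      by_contra hy
      have hodd : Odd (p * y ^ 2) := (hp.odd_of_ne_two hp2).mul (Nat.not_even_iff_odd.1 hy).pow
      have heven : p * y ^ 2 = 2 * (2 * k ^ 2 + 2 * k) := by linarith
      exact Nat.not_odd_iff_even.2 (heven ▸ even_two_mul _) hodd
    obtain ⟨c, rfl⟩ := hyeven.two_dvd
    obtain ⟨u, v, ⟨hu, hv⟩ | ⟨hv, hu⟩⟩ :=
      eq_sq_and_eq_prime_mul_sq_of_mul_eq hp (c := c) (a := k + 1) (b := k) (by simp) (by linarith)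
    · have hu1 : 1 < u := by by_contra! hu1; interval_cases u <;> omega
      have := hmin u v hu1 (by linarith)
      nlinarith
    · exact ⟨u, v, .inl (by zify at hu hv; linarith)⟩

theorem exists_sq_sub_prime_mul_sq_eq_neg_one {p : ℕ} (hp : p.Prime) (h : p = 2 ∨ p % 4 = 1) :
    ∃ u v : ℤ, u ^ 2 - p * v ^ 2 = -1 := by
  rcases h with rfl | h
  · exact ⟨1, 1, by norm_num⟩
  obtain ⟨u, v, huv⟩ := exists_sq_sub_prime_mul_sq_eq hp (by rintro rfl; omega)
  refine ⟨u, v, huv.resolve_right fun huv ↦ ?_⟩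
  have hp4 : (p : ZMod 4) = 1 := by simpa [h] using (ZMod.natCast_mod p 4).symm
  have sq_sub_sq_ne_two : ∀ a b : ZMod 4, a ^ 2 - b ^ 2 ≠ 2 := by decide
  have neg_two_eq_two : (-2 : ZMod 4) = 2 := by decide
  apply sq_sub_sq_ne_two u v
  rcases huv with huv | huv <;>
    simpa [hp4, neg_two_eq_two] using congrArg (Int.cast : ℤ → ZMod 4) huv

theorem exists_natAbs_sq_sub_prime_mul_sq_eq_two {p : ℕ} (hp : p.Prime) (h : p = 2 ∨ p % 4 = 3) :
    ∃ u v : ℤ, (u ^ 2 - p * v ^ 2).natAbs = 2 := by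
  rcases h with rfl | h
  · exact ⟨0, 1, by norm_num⟩
  obtain ⟨u, v, huv⟩ := exists_sq_sub_prime_mul_sq_eq hp (by rintro rfl; omega)
  refine ⟨u, v, Int.natAbs_eq_iff.2 (huv.resolve_left fun huv ↦ ?_)⟩
  have hp4 : (p : ZMod 4) = 3 := by simpa [h] using (ZMod.natCast_mod p 4).symm
  have sq_sub_three_mul_sq_ne : ∀ a b : ZMod 4, a ^ 2 - 3 * b ^ 2 ≠ -1 := by decide
  exact sq_sub_three_mul_sq_ne u v (by simpa [hp4] using congrArg (Int.cast : ℤ → ZMod 4) huv)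

end Pell

section DedekindDomain

variable {R : Type*} [CommRing R]

theorem smul_span_singleton {G : Type*} [Group G] [MulSemiringAction G R] (g : G)
    (a : R) : g • Ideal.span {a} = Ideal.span {g • a} := by
  simp only [Ideal.smul_closure, Set.smul_set_singleton]

theorem isPrincipal_of_isPrincipal_mul_span [IsDomain R] {J : Ideal R} {b : R} (hb : b ≠ 0)
    (h : (J * Ideal.span {b}).IsPrincipal) : J.IsPrincipal := by
  obtain ⟨c, hc⟩ := h
  rw [Ideal.submodule_span_eq] at hc
  obtain ⟨d, rfl⟩ : b ∣ c := Ideal.mem_span_singleton.1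
    (Ideal.mul_le_right (hc ▸ Ideal.mem_span_singleton_self c : c ∈ J * Ideal.span {b}))
  refine ⟨d, (Ideal.span_singleton_mul_left_inj hb).1 ?_⟩
  rw [hc, Ideal.submodule_span_eq, Ideal.span_singleton_mul_span_singleton, mul_comm]

theorem toPrincipalIdeal_eq_toPrincipalIdeal_iff [IsDomain R] {K : Type*} [Field K] [Algebra R K]
    [IsFractionRing R K] {x y : Kˣ} :
    toPrincipalIdeal R K x = toPrincipalIdeal R K y ↔ ∃ u : Rˣ, u • (x : K) = y := by
  rw [eq_comm, toPrincipalIdeal_eq_iff, coe_toPrincipalIdeal, eq_comm,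
    FractionalIdeal.spanSingleton_eq_spanSingleton]

variable [IsDedekindDomain R]

theorem isPrincipal_of_smul_eq_self {G : Type*} [Group G] [MulSemiringAction G R] {g : G}
    (hg : g * g = 1) (hnorm : ∀ P : Ideal R, P.IsPrime → (P * g • P).IsPrincipal)
    (hfixed : ∀ P : Ideal R, P.IsPrime → g • P = P → P.IsPrincipal)
    (J : Ideal R) (hJ : g • J = J) : J.IsPrincipal := by
  induction J using WellFoundedGT.induction with | ind J ih
  rcases eq_or_ne J ⊥ with rfl | hJ0
  · exact bot_isPrincipal
  rcases eq_or_ne J ⊤ with rfl | hJ1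
  · exact top_isPrincipal
  have isPrincipal_of_dvd (A : Ideal R) (hA : A.IsPrincipal) (hA1 : A ≠ ⊤) (hgA : g • A = A)
      (hAJ : A ∣ J) : J.IsPrincipal := by
    obtain ⟨B, rfl⟩ := hAJ
    have hB0 : B ≠ ⊥ := right_ne_zero_of_mul hJ0
    have hlt : A * B < B := Ideal.mul_le_right.lt_of_ne fun h ↦
      hA1 (by rwa [mul_eq_right₀ hB0, Ideal.one_eq_top] at h)
    rw [smul_mul', hgA] at hJ
    have hgB : g • B = B := mul_left_cancel₀ (left_ne_zero_of_mul hJ0) hJ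
    exact (Ideal.isPrincipalSubmonoid R).mul_mem hA (ih B hlt hgB)
  obtain ⟨P, hP, hJP⟩ := Ideal.exists_le_maximal J hJ1
  by_cases hgP : g • P = P
  · exact isPrincipal_of_dvd P (hfixed P hP.isPrime hgP) hP.ne_top hgP (Ideal.dvd_iff_le.2 hJP)
  have hgP0 : g • P ≠ ⊥ := fun h ↦ hJ0 (le_bot_iff.1 (h ▸ hJ ▸ smul_mono_right g hJP))
  have hcoprime : IsCoprime P (g • P) :=
    have := (hP.isPrime.smul g).isMaximal hgP0
    Ideal.isCoprime_of_isMaximal (Ne.symm hgP)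
  refine isPrincipal_of_dvd (P * g • P) (hnorm P hP.isPrime)
    (fun h ↦ hP.ne_top (top_le_iff.1 (h ▸ Ideal.mul_le_left))) ?_
    (hcoprime.mul_dvd (Ideal.dvd_iff_le.2 hJP)
      (Ideal.dvd_iff_le.2 (hJ ▸ smul_mono_right g hJP)))
  rw [smul_mul', smul_smul, hg, one_smul, mul_comm]

/- By the argument of Hilbert 90 for `e / n`, which satisfies `(e / n) * g • (e / n) = 1`: the ideal
`g • (e + n) J` is fixed by `g` because `e * g • (e + n) = n * (e + n)`. -/
theorem isPrincipal_of_sq_eq_span_singleton {G : Type*} [Group G] [MulSemiringAction G R] {g : G}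
    (hg : g * g = 1) (hfixed : ∀ J : Ideal R, g • J = J → J.IsPrincipal) {J : Ideal R} {e n : R}
    (hn : n ≠ 0) (hgn : g • n = n) (hJg : J * g • J = Ideal.span {n}) (hJ : J ^ 2 = Ideal.span {e})
    (he : e * g • e = n ^ 2) : J.IsPrincipal := by
  have hJ0 : J ≠ 0 := by
    rintro rfl
    exact hn (Ideal.span_singleton_eq_bot.1 (hJg.symm.trans (Ideal.bot_mul _)))
  by_cases hen : e + n = 0
  · refine hfixed J (mul_left_cancel₀ hJ0 ?_)
    rw [hJg, ← sq, hJ, eq_neg_of_add_eq_zero_left hen, Ideal.span_singleton_neg]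
  · refine isPrincipal_of_isPrincipal_mul_span (b := g • (e + n))
      (by rwa [Ne, smul_eq_zero_iff_eq]) (hfixed _ (mul_left_cancel₀ hJ0 ?_))
    rw [smul_mul', smul_span_singleton, smul_smul, hg, one_smul, ← mul_assoc, ← mul_assoc, hJg,
      ← sq, hJ, Ideal.span_singleton_mul_span_singleton, Ideal.span_singleton_mul_span_singleton]
    congr 2
    rw [smul_add, hgn]
    linear_combination -he

theorem exists_pow_eq_span_singleton [Finite (ClassGroup R)] (I : Ideal R) :
    ∃ h ≠ 0, ∃ a, I ^ h = Ideal.span {a} := by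
  rcases eq_or_ne I ⊥ with rfl | hI
  · exact ⟨1, one_ne_zero, 0, by simp⟩
  have hpow := pow_card_eq_one' (x := ClassGroup.mk0 ⟨I, mem_nonZeroDivisors_of_ne_zero hI⟩)
  rw [← map_pow] at hpow
  obtain ⟨a, ha⟩ := (ClassGroup.mk0_eq_one_iff _).1 hpow
  exact ⟨_, Nat.card_pos.ne', a, ha⟩

theorem exists_span_singleton_eq_of_toPrincipalIdeal_eq_mk0 {K : Type*} [Field K] [Algebra R K]
    [IsFractionRing R K] {x : Kˣ} {J : nonZeroDivisors (Ideal R)}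
    (h : toPrincipalIdeal R K x = FractionalIdeal.mk0 K J) :
    ∃ e : R, algebraMap R K e = x ∧ Ideal.span {e} = (J : Ideal R) := by
  rw [toPrincipalIdeal_eq_iff, FractionalIdeal.coe_mk0] at h
  obtain ⟨e, -, he⟩ := (FractionalIdeal.mem_coeIdeal _).1
    (h ▸ FractionalIdeal.mem_spanSingleton_self _ (x : K))
  rw [← he, ← FractionalIdeal.coeIdeal_span_singleton] at h
  exact ⟨e, he, FractionalIdeal.coeIdeal_injective h⟩

theorem mk0_mem_range_toPrincipalIdeal {K : Type*} [Field K] [Algebra R K] [IsFractionRing R K]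
    {J : nonZeroDivisors (Ideal R)} (hJ : (J : Ideal R).IsPrincipal) :
    FractionalIdeal.mk0 K J ∈ (toPrincipalIdeal R K).range := by
  obtain ⟨a, ha⟩ := hJ
  rw [Ideal.submodule_span_eq] at ha
  have ha0 : algebraMap R K a ≠ 0 := fun h ↦ nonZeroDivisors.coe_ne_zero J
    (by simpa [ha] using h)
  exact ⟨Units.mk0 _ ha0, by
    rw [toPrincipalIdeal_eq_iff, FractionalIdeal.coe_mk0, ha, Units.val_mk0,
      FractionalIdeal.coeIdeal_span_singleton]⟩

theorem exists_mul_toPrincipalIdeal_eq_mk0 {K : Type*} [Field K] [Algebra R K]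
    [IsFractionRing R K] (I : (FractionalIdeal (nonZeroDivisors R) K)ˣ) :
    ∃ (x : Kˣ) (J : nonZeroDivisors (Ideal R)),
      I * toPrincipalIdeal R K x = FractionalIdeal.mk0 K J := by
  obtain ⟨J, hJ⟩ := ClassGroup.mk0_surjective
    ((ClassGroup.equiv K).symm (QuotientGroup.mk' (toPrincipalIdeal R K).range I))
  rw [MulEquiv.eq_symm_apply, ClassGroup.equiv_mk0, eq_comm, QuotientGroup.mk'_eq_mk'] at hJ
  obtain ⟨_, ⟨x, rfl⟩, hx⟩ := hJ
  exact ⟨x, J, hx⟩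

end DedekindDomain

section NumberField

variable {K : Type*} [Field K] [NumberField K]

theorem algebraMap_norm_int_eq_prod_smul [IsGalois ℚ K] (α : 𝓞 K) :
    algebraMap ℤ (𝓞 K) (Algebra.norm ℤ α) = ∏ τ : Gal(K/ℚ), τ • α := by
  apply RingOfIntegers.coe_injective
  rw [map_prod, ← IsScalarTower.algebraMap_apply, IsScalarTower.algebraMap_apply ℤ ℚ K,
    eq_intCast, Algebra.coe_norm_int, Algebra.norm_eq_prod_automorphisms]
  rfl

theorem span_natAbs {R : Type*} [CommRing R] (n : ℤ) :
    Ideal.span {(n.natAbs : R)} = Ideal.span {(n : R)} := by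
  rcases n.natAbs_eq with h | h <;> nth_rw 2 [h] <;> simp [Ideal.span_singleton_neg]

/- A power of `I` is principal and ideals have at most one root of each exponent, so it is enough
to consider principal ideals. -/
theorem prod_smul_eq_span_absNorm [IsGalois ℚ K] (I : Ideal (𝓞 K)) :
    ∏ τ : Gal(K/ℚ), τ • I = Ideal.span {(Ideal.absNorm I : 𝓞 K)} := by
  obtain ⟨h, hh, α, hα⟩ := exists_pow_eq_span_singleton I
  have hnorm : Ideal.absNorm I ^ h = (Algebra.norm ℤ α).natAbs := by
    rw [← map_pow, hα, Ideal.absNorm_span_singleton]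
  apply pow_left_injective hh
  calc (∏ τ : Gal(K/ℚ), τ • I) ^ h = ∏ τ : Gal(K/ℚ), Ideal.span {τ • α} := by
        simp only [← Finset.prod_pow, ← smul_pow', hα, smul_span_singleton]
    _ = Ideal.span {((Algebra.norm ℤ α : ℤ) : 𝓞 K)} := by
        rw [Ideal.prod_span_singleton, ← algebraMap_norm_int_eq_prod_smul, eq_intCast]
    _ = Ideal.span {(Ideal.absNorm I : 𝓞 K)} ^ h := by
        rw [Ideal.span_singleton_pow, ← Nat.cast_pow, hnorm, span_natAbs]

theorem exists_ringHom_zmod_ker_eq {P : Ideal (𝓞 K)} {q : ℕ} (hq : q.Prime)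
    (hP : Ideal.absNorm P = q) : ∃ f : 𝓞 K →+* ZMod q, RingHom.ker f = P := by
  rw [Ideal.absNorm_apply, Submodule.cardQuot_apply] at hP
  have : Finite (𝓞 K ⧸ P) := Nat.finite_of_card_ne_zero (hP ▸ hq.ne_zero)
  have := Fintype.ofFinite (𝓞 K ⧸ P)
  let e : ZMod q ≃+* 𝓞 K ⧸ P := ZMod.ringEquivOfPrime _ hq (Fintype.card_eq_nat_card.trans hP)
  exact ⟨e.symm.toRingHom.comp (Ideal.Quotient.mk P), by
    rw [RingHom.ker_comp_of_injective _ e.symm.injective, Ideal.mk_ker]⟩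

theorem stabilizer_le_inertia_of_prime_absNorm {G : Type*} [Group G] [MulSemiringAction G (𝓞 K)]
    {P : Ideal (𝓞 K)} (hP : (Ideal.absNorm P).Prime) :
    MulAction.stabilizer G P ≤ P.inertia G := by
  intro g hg α
  obtain ⟨f, hf⟩ := exists_ringHom_zmod_ker_eq hP rfl
  obtain ⟨m, hm⟩ := ZMod.intCast_surjective (f α)
  have hαm : α - m ∈ P := by rw [← hf, RingHom.mem_ker, map_sub, map_intCast, hm, sub_self]
  have hgm : g • (m : 𝓞 K) = m := map_intCast (MulSemiringAction.toRingHom G (𝓞 K) g) m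
  have hgαm : g • α - m ∈ P := by
    rw [← hgm, ← smul_sub, ← MulAction.mem_stabilizer_iff.1 hg]
    exact Ideal.smul_mem_pointwise_smul g _ P hαm
  simpa using sub_mem hgαm hαm

theorem eq_span_singleton_of_mem_of_prime_natAbs_norm {P : Ideal (𝓞 K)} [P.IsPrime] {π : 𝓞 K}
    (hπ : (Algebra.norm ℤ π).natAbs.Prime) (hπP : π ∈ P) : P = Ideal.span {π} := by
  have hprime : (Ideal.span {π}).IsPrime := Ideal.isPrime_of_irreducible_absNorm
    (by rwa [Ideal.absNorm_span_singleton])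
  have hπ0 : Ideal.span {π} ≠ ⊥ := by
    rintro h
    simp [Ideal.span_singleton_eq_bot.1 h, Nat.not_prime_zero] at hπ
  exact ((hprime.isMaximal hπ0).eq_of_le (Ideal.IsPrime.ne_top ‹_›)
    ((Ideal.span_singleton_le_iff_mem _).2 hπP)).symm

theorem isPrincipal_or_prime_absNorm_of_finrank_eq_two (hK : Module.finrank ℚ K = 2)
    (P : Ideal (𝓞 K)) [hP : P.IsPrime] : P.IsPrincipal ∨ (Ideal.absNorm P).Prime := by
  rcases eq_or_ne P ⊥ with rfl | hP0
  · exact .inl bot_isPrincipal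
  have : NeZero P := ⟨hP0⟩
  have hq := Nat.absNorm_under_prime P
  set q := Ideal.absNorm (Ideal.under ℤ P)
  have hqP : (q : 𝓞 K) ∈ P := by
    simpa using Ideal.mem_comap.1 (Ideal.absNorm_mem (Ideal.under ℤ P))
  obtain ⟨M, hM⟩ := Ideal.dvd_span_singleton.2 hqP
  have hnorm : Ideal.absNorm P * Ideal.absNorm M = q ^ 2 := by
    rw [← map_mul, ← hM, Ideal.absNorm_span_singleton, ← Int.natAbs_natCast (q ^ 2),
      ← map_natCast (algebraMap ℤ (𝓞 K)), Algebra.norm_algebraMap, RingOfIntegers.rank, hK,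
      Nat.cast_pow]
  obtain ⟨k, hk, hkP⟩ := (Nat.dvd_prime_pow hq).1 (Dvd.intro _ hnorm)
  interval_cases k
  · exact absurd (Ideal.absNorm_eq_one_iff.1 hkP) hP.ne_top
  · exact .inr (by rwa [hkP, pow_one])
  · have hM1 : Ideal.absNorm M = 1 :=
      Nat.eq_of_mul_eq_mul_left (pow_pos hq.pos 2) (by rw [← hkP, hnorm, hkP, mul_one])
    rw [Ideal.absNorm_eq_one_iff.1 hM1, Ideal.mul_top] at hM
    exact .inl ⟨q, hM.symm⟩

end NumberField

section NarrowClassGroup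

variable {K : Type*} [Field K]

variable (K) in
/-- The units of `K` that are positive in every real embedding; `totPosPrincipal K` consists of the
principal ideals they generate. -/
noncomputable def totallyPositiveUnits : Subgroup Kˣ :=
  ⨅ φ : K →+* ℝ, (Units.posSubgroup ℝ).comap (Units.map φ)

theorem mem_totallyPositiveUnits {x : Kˣ} :
    x ∈ totallyPositiveUnits K ↔ ∀ φ : K →+* ℝ, 0 < φ x := by
  simp [totallyPositiveUnits, Subgroup.mem_iInf]

variable [NumberField K]

instance : (totallyPositiveUnits K).FiniteIndex := by
  have : Finite (K →+* ℝ) :=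
    .of_injective (Complex.ofRealHom.comp ·) fun _ _ h ↦
      RingHom.ext fun x ↦ Complex.ofReal_injective (RingHom.congr_fun h x)
  have : (Units.posSubgroup ℝ).FiniteIndex := ⟨by simp [Units.index_posSubgroup]⟩
  exact Subgroup.finiteIndex_iInf fun φ ↦ ⟨by
    rw [Subgroup.index_comap]
    exact Subgroup.isFiniteRelIndex_of_finiteIndex.relIndex_ne_zero⟩

theorem totPosPrincipal_eq_map :
    totPosPrincipal K = (totallyPositiveUnits K).map (toPrincipalIdeal (𝓞 K) K) := by
  apply le_antisymm
  · refine (Subgroup.closure_le _).2 ?_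
    rintro I ⟨a, ha, hI⟩
    have ha0 : a ≠ 0 := by
      rintro rfl
      simp at hI
    exact ⟨Units.mk0 a ha0, mem_totallyPositiveUnits.2 ha, by
      rw [toPrincipalIdeal_eq_iff, hI, Units.val_mk0]⟩
  · rintro _ ⟨x, hx, rfl⟩
    exact Subgroup.subset_closure ⟨x, mem_totallyPositiveUnits.1 hx, coe_toPrincipalIdeal x⟩

instance : Finite (narrowClassGroup K) := by
  have : Finite ((FractionalIdeal (nonZeroDivisors (𝓞 K)) K)ˣ ⧸ (toPrincipalIdeal (𝓞 K) K).range) :=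
    (ClassGroup.equiv K).toEquiv.finite_iff.1 inferInstance
  have hrange : (toPrincipalIdeal (𝓞 K) K).range.FiniteIndex :=
    Subgroup.finiteIndex_of_finite_quotient
  have hsup : (totallyPositiveUnits K ⊔ (toPrincipalIdeal (𝓞 K) K).ker).FiniteIndex :=
    Subgroup.finiteIndex_of_le le_sup_left
  have : (totPosPrincipal K).FiniteIndex := ⟨by
    rw [totPosPrincipal_eq_map, Subgroup.index_map]
    exact mul_ne_zero hsup.index_ne_zero hrange.index_ne_zero⟩
  exact Subgroup.finite_quotient_of_finiteIndex

namespace narrowClassGroup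

/-- The class of a fractional ideal in the narrow class group. -/
noncomputable def mk : (FractionalIdeal (nonZeroDivisors (𝓞 K)) K)ˣ →* narrowClassGroup K :=
  QuotientGroup.mk' (totPosPrincipal K)

theorem mk_surjective : Function.Surjective (mk (K := K)) :=
  QuotientGroup.mk'_surjective _

theorem mk_eq_one_iff {I : (FractionalIdeal (nonZeroDivisors (𝓞 K)) K)ˣ} :
    mk I = 1 ↔ I ∈ totPosPrincipal K :=
  QuotientGroup.eq_one_iff I

end narrowClassGroup

end NarrowClassGroup

section QuadraticExtension

variable {F K : Type*} [Field F] [Field K] [Algebra F K] [Algebra.IsQuadraticExtension F K]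
  [IsGalois F K] {σ : Gal(K/F)}

variable (F K) in
theorem nat_card_gal_eq_two : Nat.card Gal(K/F) = 2 := by
  rw [IsGalois.card_aut_eq_finrank, Algebra.IsQuadraticExtension.finrank_eq_two]

variable (F K) in
theorem exists_gal_ne_one : ∃ σ : Gal(K/F), σ ≠ 1 :=
  ((Nat.card_eq_two_iff' 1).1 (nat_card_gal_eq_two F K)).exists

theorem gal_eq_one_or_eq (hσ : σ ≠ 1) (τ : Gal(K/F)) : τ = 1 ∨ τ = σ := by
  by_contra! h
  exact h.2 (((Nat.card_eq_two_iff' 1).1 (nat_card_gal_eq_two F K)).unique h.1 hσ)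

theorem gal_mul_self (τ : Gal(K/F)) : τ * τ = 1 := by
  rw [← sq, ← nat_card_gal_eq_two F K, pow_card_eq_one']

theorem prod_gal_eq_mul {M : Type*} [CommMonoid M] (hσ : σ ≠ 1) (f : Gal(K/F) → M) :
    ∏ τ, f τ = f 1 * f σ := by
  classical
  rw [← Finset.prod_pair hσ.symm]
  refine (Finset.prod_subset (Finset.subset_univ _) fun τ _ hτ ↦ ?_).symm
  exact absurd (by simpa using gal_eq_one_or_eq hσ τ) hτ

theorem algebraMap_norm_eq_mul (hσ : σ ≠ 1) (x : K) :
    algebraMap F K (Algebra.norm F x) = x * σ x := by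
  rw [Algebra.norm_eq_prod_automorphisms, prod_gal_eq_mul hσ, AlgEquiv.one_apply]

end QuadraticExtension

section QuadraticField

variable {K : Type*} [Field K] [NumberField K] [Algebra.IsQuadraticExtension ℚ K] {σ : Gal(K/ℚ)}

theorem intCast_norm_int_eq_mul_smul (hσ : σ ≠ 1) (α : 𝓞 K) :
    ((Algebra.norm ℤ α : ℤ) : 𝓞 K) = α * σ • α := by
  rw [← eq_intCast (algebraMap ℤ (𝓞 K)), algebraMap_norm_int_eq_prod_smul, prod_gal_eq_mul hσ,
    one_smul]

theorem mul_smul_eq_span_absNorm (hσ : σ ≠ 1) (I : Ideal (𝓞 K)) :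
    I * σ • I = Ideal.span {(Ideal.absNorm I : 𝓞 K)} := by
  rw [← prod_smul_eq_span_absNorm, prod_gal_eq_mul hσ, one_smul]

theorem ratCast_norm_eq_mul (hσ : σ ≠ 1) (φ : K →+* ℝ) (x : K) :
    (Algebra.norm ℚ x : ℝ) = φ x * φ (σ x) := by
  rw [← map_mul, ← algebraMap_norm_eq_mul hσ, eq_ratCast, map_ratCast]

theorem realEmbedding_eq_or_eq_comp (hσ : σ ≠ 1) (φ ψ : K →+* ℝ) :
    (∀ x, ψ x = φ x) ∨ ∀ x, ψ x = φ (σ x) := by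
  obtain ⟨τ, hτ⟩ := ComplexEmbedding.exists_comp_symm_eq_of_comp_eq (k := ℚ)
    (Complex.ofRealHom.comp φ) (Complex.ofRealHom.comp ψ) (RingHom.ext_rat _ _)
  have hψ (x : K) : ψ x = φ (τ.symm x) := Complex.ofReal_injective (RingHom.congr_fun hτ x).symm
  refine (gal_eq_one_or_eq hσ τ.symm).imp ?_ ?_ <;> intro h x <;> rw [hψ, h]
  rfl

theorem norm_pos_of_mem_totallyPositiveUnits (φ : K →+* ℝ) {x : Kˣ}
    (hx : x ∈ totallyPositiveUnits K) : 0 < Algebra.norm ℚ (x : K) := by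
  obtain ⟨σ, hσ⟩ := exists_gal_ne_one ℚ K
  rw [mem_totallyPositiveUnits] at hx
  have := mul_pos (hx φ) (hx (φ.comp (σ : K →+* K)))
  rwa [RingHom.comp_apply, RingHom.coe_coe, ← ratCast_norm_eq_mul hσ, Rat.cast_pos] at this

theorem mem_or_neg_mem_totallyPositiveUnits {x : Kˣ} (hx : 0 < Algebra.norm ℚ (x : K)) :
    x ∈ totallyPositiveUnits K ∨ -x ∈ totallyPositiveUnits K := by
  obtain ⟨σ, hσ⟩ := exists_gal_ne_one ℚ K
  simp only [mem_totallyPositiveUnits, Units.val_neg, map_neg, neg_pos]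
  refine or_iff_not_imp_left.2 fun h ψ ↦ ?_
  obtain ⟨φ, hφ⟩ := not_forall.1 h
  have hpos : 0 < φ x * φ (σ x) := by
    rw [← ratCast_norm_eq_mul hσ]
    exact_mod_cast hx
  have hφσx : φ (σ x) < 0 := neg_of_mul_pos_right hpos (not_lt.1 hφ)
  have hφx : φ x < 0 := (neg_iff_neg_of_mul_pos hpos).2 hφσx
  rcases realEmbedding_eq_or_eq_comp hσ φ ψ with h | h <;> rwa [h]

theorem toPrincipalIdeal_mem_totPosPrincipal {x : Kˣ} (hx : 0 < Algebra.norm ℚ (x : K)) :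
    toPrincipalIdeal (𝓞 K) K x ∈ totPosPrincipal K := by
  rw [totPosPrincipal_eq_map]
  rcases mem_or_neg_mem_totallyPositiveUnits hx with h | h
  · exact ⟨x, h, rfl⟩
  · exact ⟨-x, h, toPrincipalIdeal_eq_toPrincipalIdeal_iff.2 ⟨-1, by simp [Units.smul_def]⟩⟩

theorem exists_norm_eq_neg_one_of_mem_totPosPrincipal (φ : K →+* ℝ) {x : Kˣ}
    (hx : Algebra.norm ℚ (x : K) < 0) (hmem : toPrincipalIdeal (𝓞 K) K x ∈ totPosPrincipal K) :
    ∃ w : 𝓞 K, Algebra.norm ℤ w = -1 := by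
  rw [totPosPrincipal_eq_map] at hmem
  obtain ⟨y, hy, hyx⟩ := hmem
  obtain ⟨u, hu⟩ := toPrincipalIdeal_eq_toPrincipalIdeal_iff.1 hyx
  rw [← hu, Units.smul_def, Algebra.smul_def, map_mul, ← Algebra.coe_norm_int] at hx
  have hneg : Algebra.norm ℤ (u : 𝓞 K) < 0 :=
    Int.cast_lt_zero.1 (neg_of_mul_neg_left hx (norm_pos_of_mem_totallyPositiveUnits φ hy).le)
  refine ⟨u, (Int.isUnit_iff.1 (u.isUnit.map (Algebra.norm ℤ))).resolve_left fun h ↦ ?_⟩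
  exact absurd hneg (by rw [h]; decide)

theorem toPrincipalIdeal_mem_totPosPrincipal_of_norm_eq_neg_one {x : Kˣ}
    (hx : Algebra.norm ℚ (x : K) < 0) {w : 𝓞 K} (hw : Algebra.norm ℤ w = -1) :
    toPrincipalIdeal (𝓞 K) K x ∈ totPosPrincipal K := by
  have hunit : IsUnit w := by
    rw [NumberField.isUnit_iff_norm, RingOfIntegers.coe_norm, ← Algebra.coe_norm_int, hw]
    simp
  obtain ⟨u, rfl⟩ := hunit
  have hux : 0 < Algebra.norm ℚ ((Units.map (algebraMap (𝓞 K) K) u * x : Kˣ) : K) := by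
    rw [Units.val_mul, map_mul, Units.coe_map, MonoidHom.coe_coe, ← Algebra.coe_norm_int, hw]
    simpa using hx
  convert! toPrincipalIdeal_mem_totPosPrincipal hux using 1
  exact toPrincipalIdeal_eq_toPrincipalIdeal_iff.2 ⟨u, by simp [Units.smul_def, Algebra.smul_def]⟩

theorem isPrincipal_of_sq_eq_span_singleton_of_norm_pos (hσ : σ ≠ 1)
    (hfixed : ∀ P : Ideal (𝓞 K), P.IsPrime → σ • P = P → P.IsPrincipal)
    {J : Ideal (𝓞 K)} {e : 𝓞 K} (hJ : J ^ 2 = Ideal.span {e}) (he : 0 < Algebra.norm ℤ e) :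
    J.IsPrincipal := by
  have hnorm : ((Ideal.absNorm J ^ 2 : ℕ) : ℤ) = Algebra.norm ℤ e := by
    rw [← map_pow, hJ, Ideal.absNorm_span_singleton, Int.natAbs_of_nonneg he.le]
  refine isPrincipal_of_sq_eq_span_singleton (gal_mul_self σ)
    (isPrincipal_of_smul_eq_self (gal_mul_self σ)
      (fun P _ ↦ ⟨_, mul_smul_eq_span_absNorm hσ P⟩) hfixed) ?_
    (map_natCast (MulSemiringAction.toRingHom _ _ σ) _) (mul_smul_eq_span_absNorm hσ J) hJ ?_
  · intro h
    rw [Nat.cast_eq_zero.1 h] at hnorm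
    exact he.ne hnorm
  · rw [← intCast_norm_int_eq_mul_smul hσ, ← hnorm, Int.cast_natCast, Nat.cast_pow]

theorem mem_range_toPrincipalIdeal_of_sq_mem_totPosPrincipal (φ : K →+* ℝ) (hσ : σ ≠ 1)
    (hfixed : ∀ P : Ideal (𝓞 K), P.IsPrime → σ • P = P → P.IsPrincipal)
    {I : (FractionalIdeal (nonZeroDivisors (𝓞 K)) K)ˣ} (hI : I ^ 2 ∈ totPosPrincipal K) :
    I ∈ (toPrincipalIdeal (𝓞 K) K).range := by
  rw [totPosPrincipal_eq_map] at hI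
  obtain ⟨y, hy, hyI⟩ := hI
  obtain ⟨x, J, hJ⟩ := exists_mul_toPrincipalIdeal_eq_mk0 I
  have hJ2 : toPrincipalIdeal (𝓞 K) K (y * x ^ 2) = FractionalIdeal.mk0 K (J ^ 2) := by
    rw [map_mul, map_pow, hyI, map_pow, ← hJ, mul_pow]
  obtain ⟨e, he, heJ⟩ := exists_span_singleton_eq_of_toPrincipalIdeal_eq_mk0 hJ2
  have hepos : 0 < Algebra.norm ℤ e := by
    have hy := norm_pos_of_mem_totallyPositiveUnits φ hy
    have hx : Algebra.norm ℚ (x : K) ≠ 0 := Algebra.norm_ne_zero_iff.2 x.ne_zero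
    have hnorm : (Algebra.norm ℤ e : ℚ) = Algebra.norm ℚ (y : K) * Algebra.norm ℚ (x : K) ^ 2 := by
      rw [Algebra.coe_norm_int, ← map_pow, ← map_mul]
      exact congrArg _ he
    rw [← Int.cast_pos (R := ℚ), hnorm]
    positivity
  have hx : toPrincipalIdeal (𝓞 K) K x ∈ (toPrincipalIdeal (𝓞 K) K).range := ⟨x, rfl⟩
  rw [← Subgroup.mul_mem_cancel_right _ hx, hJ]
  exact mk0_mem_range_toPrincipalIdeal
    (isPrincipal_of_sq_eq_span_singleton_of_norm_pos hσ hfixed heJ.symm hepos)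

theorem narrowClassGroup.sq_eq_one_iff (φ : K →+* ℝ) (hσ : σ ≠ 1)
    (hfixed : ∀ P : Ideal (𝓞 K), P.IsPrime → σ • P = P → P.IsPrincipal) {x : Kˣ}
    (hx : Algebra.norm ℚ (x : K) < 0) {c : narrowClassGroup K} :
    c ^ 2 = 1 ↔ c = 1 ∨ c = mk (toPrincipalIdeal (𝓞 K) K x) := by
  constructor
  · obtain ⟨I, rfl⟩ := mk_surjective c
    intro h
    rw [← map_pow, mk_eq_one_iff] at h
    obtain ⟨y, rfl⟩ := mem_range_toPrincipalIdeal_of_sq_mem_totPosPrincipal φ hσ hfixed h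
    rcases (Algebra.norm_ne_zero_iff.2 y.ne_zero : Algebra.norm ℚ (y : K) ≠ 0).lt_or_gt with hy | hy
    · right
      rw [← div_eq_one, ← map_div, ← map_div, mk_eq_one_iff]
      apply toPrincipalIdeal_mem_totPosPrincipal
      rw [← div_mul_cancel y x, Units.val_mul, map_mul] at hy
      exact pos_of_mul_neg_left hy hx.le
    · exact .inl (mk_eq_one_iff.2 (toPrincipalIdeal_mem_totPosPrincipal hy))
  · rintro (rfl | rfl)
    · exact one_pow 2
    · rw [← map_pow, ← map_pow, mk_eq_one_iff]
      apply toPrincipalIdeal_mem_totPosPrincipal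
      rw [Units.val_pow_eq_pow_val, map_pow]
      exact sq_pos_of_neg hx

theorem nat_card_quotient_range_powMonoidHom_two (φ : K →+* ℝ) (hσ : σ ≠ 1)
    (hfixed : ∀ P : Ideal (𝓞 K), P.IsPrime → σ • P = P → P.IsPrincipal) {x : Kˣ}
    (hx : Algebra.norm ℚ (x : K) < 0) :
    Nat.card (narrowClassGroup K ⧸
      (powMonoidHom 2 : narrowClassGroup K →* narrowClassGroup K).range) =
      Set.ncard {1, narrowClassGroup.mk (toPrincipalIdeal (𝓞 K) K x)} := by
  rw [← Subgroup.index, Subgroup.index_range, ← SetLike.coe_sort_coe, Nat.card_coe_set_eq]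
  congr 1
  ext c
  exact narrowClassGroup.sq_eq_one_iff φ hσ hfixed hx

end QuadraticField

section SqrtPrime

variable {K : Type*} [Field K] [NumberField K]

theorem exists_two_mul_eq_one_add {θ : 𝓞 K} {k : ℤ} (hθ : θ ^ 2 = 4 * k + 1) :
    ∃ ω : 𝓞 K, 2 * ω = 1 + θ := by
  have hint : IsIntegral ℤ ((1 + θ) / 2 : K) := by
    refine ⟨.X ^ 2 - .X - Polynomial.C k, by monicity!, ?_⟩
    have hθK : (θ : K) ^ 2 = 4 * k + 1 := by
      simpa only [map_pow, map_add, map_mul, map_ofNat, map_intCast, map_one] using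
        congrArg (algebraMap (𝓞 K) K) hθ
    rw [Polynomial.eval₂_sub, Polynomial.eval₂_sub, Polynomial.eval₂_pow, Polynomial.eval₂_X,
      Polynomial.eval₂_C, eq_intCast]
    linear_combination hθK / 4
  obtain ⟨ω, hω⟩ : ∃ ω : 𝓞 K, algebraMap _ K ω = (1 + algebraMap _ K θ) / 2 :=
    ⟨⟨_, hint⟩, rfl⟩
  refine ⟨ω, RingOfIntegers.coe_injective ?_⟩
  rw [map_mul, map_add, map_ofNat, map_one, hω, mul_div_cancel₀ _ two_ne_zero]

variable [Algebra.IsQuadraticExtension ℚ K] {σ : Gal(K/ℚ)} {p : ℕ} {θ : 𝓞 K}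

theorem smul_eq_neg_of_sq_eq_natCast (hσ : σ ≠ 1) (hp : ¬IsSquare p) (hθ : θ ^ 2 = p) :
    σ • θ = -θ := by
  have hsq : (σ • θ) ^ 2 = θ ^ 2 := by
    rw [← smul_pow', hθ]
    exact map_natCast (MulSemiringAction.toRingHom _ _ σ) p
  refine (sq_eq_sq_iff_eq_or_eq_neg.1 hsq).resolve_left fun hfix ↦ hp ?_
  obtain ⟨r, hr⟩ : (θ : K) ∈ (⊥ : IntermediateField ℚ K) :=
    (IsGalois.mem_bot_iff_fixed _).2 fun τ ↦ by
      rcases gal_eq_one_or_eq hσ τ with rfl | rfl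
      · rfl
      · exact congrArg (algebraMap (𝓞 K) K) hfix
  replace hr : algebraMap ℚ K r = θ := hr
  have hrp : r ^ 2 = p := (algebraMap ℚ K).injective (by
    rw [map_pow, hr, ← map_pow, hθ, map_natCast, map_natCast])
  exact Rat.isSquare_natCast_iff.1 ⟨r, by rw [← hrp, sq]⟩

theorem norm_int_add_mul (hσ : σ ≠ 1) (hp : ¬IsSquare p) (hθ : θ ^ 2 = p) (u v : ℤ) :
    Algebra.norm ℤ (u + v * θ) = u ^ 2 - p * v ^ 2 := by
  have smul_intCast (n : ℤ) : σ • (n : 𝓞 K) = n :=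
    map_intCast (MulSemiringAction.toRingHom _ _ σ) n
  rw [← Int.cast_inj (α := 𝓞 K), intCast_norm_int_eq_mul_smul hσ, smul_add, smul_mul',
    smul_eq_neg_of_sq_eq_natCast hσ hp hθ, smul_intCast, smul_intCast]
  push_cast
  linear_combination (-(v : 𝓞 K) ^ 2) * hθ

theorem norm_int_sqrt (hσ : σ ≠ 1) (hp : ¬IsSquare p) (hθ : θ ^ 2 = p) :
    Algebra.norm ℤ θ = -p := by
  simpa using norm_int_add_mul hσ hp hθ 0 1

theorem nonempty_realEmbedding (hp : ¬IsSquare p) (hθ : θ ^ 2 = p) : Nonempty (K →+* ℝ) := by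
  obtain ⟨σ, hσ⟩ := exists_gal_ne_one ℚ K
  obtain ⟨φ⟩ : Nonempty (K →+* ℂ) := inferInstance
  suffices hφ : ComplexEmbedding.IsReal φ from ⟨hφ.embedding⟩
  obtain ⟨τ, hτ⟩ := ComplexEmbedding.exists_comp_symm_eq_of_comp_eq (k := ℚ) φ
    (ComplexEmbedding.conjugate φ) (RingHom.ext_rat _ _)
  rcases gal_eq_one_or_eq hσ τ.symm with h | h
  · rw [ComplexEmbedding.isReal_iff, ← hτ, h]
    rfl
  · exfalso
    have hconj : starRingEnd ℂ (φ θ) = -φ θ := by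
      rw [← ComplexEmbedding.conjugate_coe_eq, ← hτ, h, ← map_neg]
      exact congrArg φ (congrArg (algebraMap (𝓞 K) K) (smul_eq_neg_of_sq_eq_natCast hσ hp hθ))
    have hnormSq : (Complex.normSq (φ θ) : ℂ) = ((-p : ℝ) : ℂ) := by
      rw [← Complex.mul_conj, hconj, mul_neg, ← sq, ← map_pow, ← map_pow, hθ, map_natCast,
        map_natCast]
      simp
    have hp0 : (0 : ℝ) < p := Nat.cast_pos.2 (Nat.pos_of_ne_zero fun h ↦ hp (h ▸ IsSquare.zero))
    linarith [Complex.normSq_nonneg (φ θ), Complex.ofReal_injective hnormSq]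

theorem isPrincipal_of_smul_eq_self_of_mem (hσ : σ ≠ 1) {P : Ideal (𝓞 K)} [hP : P.IsPrime]
    (hPσ : σ • P = P) {π : 𝓞 K} (hπ : (Algebra.norm ℤ π).natAbs.Prime)
    (hmem : ((Algebra.norm ℤ π).natAbs : 𝓞 K) ∈ P) : P.IsPrincipal := by
  have hπP : π ∈ P := by
    rw [← Ideal.span_singleton_le_iff_mem, span_natAbs, Ideal.span_singleton_le_iff_mem,
      intCast_norm_int_eq_mul_smul hσ] at hmem
    refine (hP.mem_or_mem hmem).elim id fun h ↦ ?_
    rwa [← hPσ, Ideal.smul_mem_pointwise_smul_iff] at h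
  exact ⟨π, eq_span_singleton_of_mem_of_prime_natAbs_norm hπ hπP⟩

theorem sqrt_mem_of_smul_eq_self_of_mod_four_eq_one (hσ : σ ≠ 1) (hp : ¬IsSquare p)
    (hp4 : p % 4 = 1) (hθ : θ ^ 2 = p) {P : Ideal (𝓞 K)} (hP : (Ideal.absNorm P).Prime)
    (hPσ : σ • P = P) : θ ∈ P := by
  obtain ⟨ω, hω⟩ := exists_two_mul_eq_one_add (θ := θ) (k := p / 4) (by
    rw [hθ]; exact_mod_cast (by omega : p = 4 * (p / 4) + 1))
  have hωσ : σ • ω - ω = -θ := mul_left_cancel₀ (two_ne_zero' (𝓞 K)) (by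
    have hσω := congrArg (σ • ·) hω
    simp only [two_mul, smul_add, smul_one, smul_eq_neg_of_sq_eq_natCast hσ hp hθ] at hσω
    linear_combination hσω - hω)
  rw [← neg_mem_iff, ← hωσ]
  exact stabilizer_le_inertia_of_prime_absNorm hP (MulAction.mem_stabilizer_iff.2 hPσ) ω

theorem two_mem_or_sqrt_mem_of_smul_eq_self (hσ : σ ≠ 1) (hp : ¬IsSquare p)
    (hθ : θ ^ 2 = p) {P : Ideal (𝓞 K)} [hP : P.IsPrime] (hnorm : (Ideal.absNorm P).Prime)
    (hPσ : σ • P = P) : 2 ∈ P ∨ θ ∈ P := by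
  have hsub := stabilizer_le_inertia_of_prime_absNorm hnorm (MulAction.mem_stabilizer_iff.2 hPσ) θ
  rw [smul_eq_neg_of_sq_eq_natCast hσ hp hθ, ← neg_mem_iff, neg_sub, sub_neg_eq_add, ← two_mul]
    at hsub
  exact hP.mem_or_mem hsub

theorem isPrincipal_of_smul_eq_self_of_sq_eq_prime (hp : p.Prime) (hσ : σ ≠ 1) (hθ : θ ^ 2 = p)
    (P : Ideal (𝓞 K)) (hP : P.IsPrime) (hPσ : σ • P = P) : P.IsPrincipal := by
  have hsq : ¬IsSquare p := hp.prime.irreducible.not_isSquare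
  have hprincipal (h : θ ∈ P) : P.IsPrincipal :=
    ⟨θ, eq_span_singleton_of_mem_of_prime_natAbs_norm
      (by rwa [norm_int_sqrt hσ hsq hθ, Int.natAbs_neg, Int.natAbs_natCast]) h⟩
  rcases isPrincipal_or_prime_absNorm_of_finrank_eq_two
    (Algebra.IsQuadraticExtension.finrank_eq_two ℚ K) P with h | hnorm
  · exact h
  by_cases hp4 : p % 4 = 1
  · exact hprincipal (sqrt_mem_of_smul_eq_self_of_mod_four_eq_one hσ hsq hp4 hθ hnorm hPσ)
  rcases two_mem_or_sqrt_mem_of_smul_eq_self hσ hsq hθ hnorm hPσ with htwo | h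
  · have hmod : p = 2 ∨ p % 4 = 3 := by
      rcases hp.eq_two_or_odd with h | h <;> omega
    obtain ⟨u, v, huv⟩ := exists_natAbs_sq_sub_prime_mul_sq_eq_two hp hmod
    rw [← norm_int_add_mul hσ hsq hθ] at huv
    exact isPrincipal_of_smul_eq_self_of_mem hσ hPσ (by rw [huv]; exact Nat.prime_two)
      (by rw [huv]; exact_mod_cast htwo)
  · exact hprincipal h

theorem norm_int_ne_neg_one (hσ : σ ≠ 1) (hp : p.Prime) (hp4 : p % 4 = 3) (hθ : θ ^ 2 = p)
    (w : 𝓞 K) : Algebra.norm ℤ w ≠ -1 := by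
  intro hw
  have hsq : ¬IsSquare p := hp.prime.irreducible.not_isSquare
  have hnorm : Ideal.absNorm (Ideal.span {θ}) = p := by
    rw [Ideal.absNorm_span_singleton, norm_int_sqrt hσ hsq hθ, Int.natAbs_neg, Int.natAbs_natCast]
  have hstab : σ ∈ MulAction.stabilizer Gal(K/ℚ) (Ideal.span {θ}) := by
    rw [MulAction.mem_stabilizer_iff, smul_span_singleton,
      smul_eq_neg_of_sq_eq_natCast hσ hsq hθ, Ideal.span_singleton_neg]
  obtain ⟨f, hf⟩ := exists_ringHom_zmod_ker_eq hp hnorm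
  have hfσ : f (σ • w) = f w := by
    rw [← sub_eq_zero, ← map_sub, ← RingHom.mem_ker, hf]
    exact stabilizer_le_inertia_of_prime_absNorm (hnorm.symm ▸ hp) hstab w
  have : Fact p.Prime := ⟨hp⟩
  refine ZMod.mod_four_ne_three_of_sq_eq_neg_one (y := f w) ?_ hp4
  rw [sq]
  nth_rw 2 [← hfσ]
  rw [← map_mul, ← intCast_norm_int_eq_mul_smul hσ, hw]
  simp

end SqrtPrime

/-- For `F = ℚ(√p)` with `p` prime, the Gauss genus group
`Pic⁺(O_F)/Pic⁺(O_F)²` has order `1` if `p = 2` or `p ≡ 1 (mod 4)`, and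
order `2` if `p ≡ 3 (mod 4)`. -/
theorem gauss_genus_group_order
    (p : ℕ) (hp : p.Prime)
    (K : Type*) [Field K] [NumberField K]
    (h2 : Module.finrank ℚ K = 2) (θ : K) (hθ : θ ^ 2 = (p : K)) :
    ((p = 2 ∨ p % 4 = 1) →
      Nat.card (narrowClassGroup K ⧸
        (powMonoidHom 2 : narrowClassGroup K →* narrowClassGroup K).range) = 1) ∧
    (p % 4 = 3 →
      Nat.card (narrowClassGroup K ⧸
        (powMonoidHom 2 : narrowClassGroup K →* narrowClassGroup K).range) = 2) := by
  have : Algebra.IsQuadraticExtension ℚ K := { finrank_eq_two' := h2 }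
  have hsq : ¬IsSquare p := hp.prime.irreducible.not_isSquare
  obtain ⟨θ, rfl⟩ : ∃ η : 𝓞 K, (η : K) = θ :=
    ⟨⟨θ, .of_pow two_pos (hθ ▸ isIntegral_natCast p)⟩, rfl⟩
  replace hθ : θ ^ 2 = p := RingOfIntegers.coe_injective (by simpa using hθ)
  obtain ⟨σ, hσ⟩ := exists_gal_ne_one ℚ K
  obtain ⟨φ⟩ := nonempty_realEmbedding hsq hθ
  have hnorm : Algebra.norm ℚ (θ : K) < 0 := by
    simpa [← Algebra.coe_norm_int, norm_int_sqrt hσ hsq hθ] using hp.pos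
  obtain ⟨x, hx⟩ : IsUnit (θ : K) := (Algebra.norm_ne_zero_iff.1 hnorm.ne).isUnit
  rw [← hx] at hnorm
  rw [nat_card_quotient_range_powMonoidHom_two φ hσ
    (isPrincipal_of_smul_eq_self_of_sq_eq_prime hp hσ hθ) hnorm]
  constructor
  · intro hmod
    obtain ⟨u, v, huv⟩ := exists_sq_sub_prime_mul_sq_eq_neg_one hp hmod
    rw [← norm_int_add_mul hσ hsq hθ] at huv
    have hmem := toPrincipalIdeal_mem_totPosPrincipal_of_norm_eq_neg_one hnorm huv
    rw [narrowClassGroup.mk_eq_one_iff.2 hmem, Set.pair_eq_singleton, Set.ncard_singleton]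
  · intro hmod
    refine Set.ncard_pair fun h ↦ ?_
    obtain ⟨w, hw⟩ := exists_norm_eq_neg_one_of_mem_totPosPrincipal φ hnorm
      (narrowClassGroup.mk_eq_one_iff.1 h.symm)
    exact norm_int_ne_neg_one hσ hp hmod hθ w hw
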